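/- arXiv:2401.07378 — 2 statements merged into one kernel-verified Lean document; each statement's English description precedes it below -/
import Mathlib

section
/- Exactness of the NNS-EMD approximation (Theorem 2, abstract form): let F* be a feasible flow between weight vectors s and c with cost matrix D, and suppose F* is supported on nearest-supplier pairs, i.e., whenever F*_{i,j} > 0 one has D_{i,j} = min_{1 ≤ i' ≤ m} D_{i',j}. Then for every feasible flow F, Σ_{i,j} F*_{i,j} D_{i,j} ≤ Σ_{i,j} F_{i,j} D_{i,j}; consequently Σ_{i,j} F*_{i,j} D_{i,j} equals the Earth Mover's Distance EMD(s, c). -/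
open Finset

/-- A matrix `F` is a feasible flow between weight vectors `s` and `c` if all its
entries are nonnegative, its column sums are `c`, and its row sums are `s`. -/
def IsFeasibleFlow {m n : ℕ} (s : Fin m → ℝ) (c : Fin n → ℝ)
    (F : Matrix (Fin m) (Fin n) ℝ) : Prop :=
  (∀ i j, 0 ≤ F i j) ∧ (∀ j, ∑ i, F i j = c j) ∧ (∀ i, ∑ j, F i j = s i)

/-- The Earth Mover's Distance: the minimum (infimum) of the total transport cost
over all feasible flows between `s` and `c` with cost matrix `D`. -/
noncomputable def EMD {m n : ℕ} (s : Fin m → ℝ) (c : Fin n → ℝ)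
    (D : Matrix (Fin m) (Fin n) ℝ) : ℝ :=
  sInf {x : ℝ | ∃ F : Matrix (Fin m) (Fin n) ℝ,
    IsFeasibleFlow s c F ∧ x = ∑ i, ∑ j, F i j * D i j}

/-- Exactness of the NNS-EMD approximation: if a feasible flow `Fstar` is supported
on nearest-supplier pairs (whenever `Fstar i j > 0`, `D i j` attains the minimum of
`D i' j` over suppliers `i'`), then its cost is at most the cost of every feasible
flow, and hence equals the Earth Mover's Distance. -/
theorem nns_emd_exactness (m n : ℕ) (hm : 0 < m)
    (s : Fin m → ℝ) (c : Fin n → ℝ) (D : Matrix (Fin m) (Fin n) ℝ)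
    (hs : ∀ i, 0 ≤ s i) (hc : ∀ j, 0 ≤ c j)
    (hs1 : ∑ i, s i = 1) (hc1 : ∑ j, c j = 1)
    (hD : ∀ i j, 0 ≤ D i j)
    (Fstar : Matrix (Fin m) (Fin n) ℝ) (hFstar : IsFeasibleFlow s c Fstar)
    (hsupp : ∀ i j, 0 < Fstar i j →
      D i j = Finset.univ.inf' ⟨⟨0, hm⟩, Finset.mem_univ _⟩ fun i' => D i' j) :
    (∀ F : Matrix (Fin m) (Fin n) ℝ, IsFeasibleFlow s c F →
      ∑ i, ∑ j, Fstar i j * D i j ≤ ∑ i, ∑ j, F i j * D i j) ∧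
    ∑ i, ∑ j, Fstar i j * D i j = EMD s c D := by
  have key : ∀ F : Matrix (Fin m) (Fin n) ℝ, IsFeasibleFlow s c F →
      ∑ i, ∑ j, Fstar i j * D i j ≤ ∑ i, ∑ j, F i j * D i j := by
    intro F hF
    rw [Finset.sum_comm, Finset.sum_comm (f := fun i j => F i j * D i j)]
    refine Finset.sum_le_sum fun j _ => ?_
    set d : ℝ := Finset.univ.inf' ⟨⟨0, hm⟩, Finset.mem_univ _⟩ fun i' => D i' j with hd
    have h1 : ∑ i, Fstar i j * D i j = ∑ i, Fstar i j * d := by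
      refine Finset.sum_congr rfl fun i _ => ?_
      rcases (hFstar.1 i j).eq_or_lt with h | h
      · rw [← h, zero_mul, zero_mul]
      · rw [hsupp i j h]
    rw [h1, ← Finset.sum_mul, hFstar.2.1 j, ← hF.2.1 j, Finset.sum_mul]
    refine Finset.sum_le_sum fun i _ => ?_
    exact mul_le_mul_of_nonneg_left
      (Finset.inf'_le (fun i' => D i' j) (Finset.mem_univ i)) (hF.1 i j)
  refine ⟨key, ?_⟩
  have hleast : IsLeast {x : ℝ | ∃ F : Matrix (Fin m) (Fin n) ℝ,
      IsFeasibleFlow s c F ∧ x = ∑ i, ∑ j, F i j * D i j}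
      (∑ i, ∑ j, Fstar i j * D i j) := by
    refine ⟨⟨Fstar, hFstar, rfl⟩, ?_⟩
    rintro x ⟨F, hF, rfl⟩
    exact key F hF
  exact hleast.csInf_eq.symm
end

section
/- Global error bound of the NNS-EMD approximation (Theorem 1, inequality (6), abstract form): let F* be a feasible flow between weight vectors s and c with nonnegative cost matrix D, and suppose that for every supplier i there is a consumer index j*_i such that D_{i,j} ≤ D_{i,j*_i} for every j with F*_{i,j} > 0. Let F^opt be a feasible flow minimizing Σ_{i,j} F_{i,j} D_{i,j} over all feasible flows. Then 0 ≤ Σ_{i,j} F*_{i,j} D_{i,j} − Σ_{i,j} F^opt_{i,j} D_{i,j} ≤ Σ_{i=1}^m D_{i,j*_i}. -/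
open Finset

/-- Global error bound of the NNS-EMD approximation (Theorem 1, inequality (6)):
if `Fstar` is a feasible flow such that for every supplier `i` there is a consumer
`jstar i` with `D i j ≤ D i (jstar i)` whenever `Fstar i j > 0`, and `Fopt` is an
optimal feasible flow, then
`0 ≤ cost(Fstar) - cost(Fopt) ≤ ∑ i, D i (jstar i)`. -/
theorem nns_emd_global_error_bound (m n : ℕ)
    (s : Fin m → ℝ) (c : Fin n → ℝ) (D : Matrix (Fin m) (Fin n) ℝ)
    (hs : ∀ i, 0 ≤ s i) (hc : ∀ j, 0 ≤ c j)
    (hs1 : ∑ i, s i = 1) (hc1 : ∑ j, c j = 1)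
    (hD : ∀ i j, 0 ≤ D i j)
    (Fstar : Matrix (Fin m) (Fin n) ℝ) (hFstar : IsFeasibleFlow s c Fstar)
    (jstar : Fin m → Fin n)
    (hjstar : ∀ i j, 0 < Fstar i j → D i j ≤ D i (jstar i))
    (Fopt : Matrix (Fin m) (Fin n) ℝ) (hFopt : IsFeasibleFlow s c Fopt)
    (hopt : ∀ F : Matrix (Fin m) (Fin n) ℝ, IsFeasibleFlow s c F →
      ∑ i, ∑ j, Fopt i j * D i j ≤ ∑ i, ∑ j, F i j * D i j) :
    0 ≤ ∑ i, ∑ j, Fstar i j * D i j - ∑ i, ∑ j, Fopt i j * D i j ∧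
      ∑ i, ∑ j, Fstar i j * D i j - ∑ i, ∑ j, Fopt i j * D i j ≤
        ∑ i, D i (jstar i) := by
  refine ⟨sub_nonneg.mpr (hopt Fstar hFstar), ?_⟩
  have h0 : 0 ≤ ∑ i, ∑ j, Fopt i j * D i j :=
    Finset.sum_nonneg fun i _ => Finset.sum_nonneg fun j _ =>
      mul_nonneg (hFopt.1 i j) (hD i j)
  have h1 : ∑ i, ∑ j, Fstar i j * D i j ≤ ∑ i, D i (jstar i) := by
    refine Finset.sum_le_sum fun i _ => ?_
    have hsi : s i ≤ 1 := by
      rw [← hs1]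
      exact Finset.single_le_sum (fun k _ => hs k) (Finset.mem_univ i)
    calc ∑ j, Fstar i j * D i j ≤ ∑ j, Fstar i j * D i (jstar i) := by
          refine Finset.sum_le_sum fun j _ => ?_
          rcases (hFstar.1 i j).eq_or_lt with h | h
          · simp [← h]
          · exact mul_le_mul_of_nonneg_left (hjstar i j h) h.le
      _ = s i * D i (jstar i) := by rw [← Finset.sum_mul, hFstar.2.2 i]
      _ ≤ D i (jstar i) := mul_le_of_le_one_left (hD _ _) hsi
  linarith
end
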